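/- For every natural number r ≥ 0, the residue classes of the monomials α^a·β^b·γ^c with a + b + c < r form a ℂ-vector-space basis of F_r = ℂ[α,β,γ]/J_r; in particular dim_ℂ F_r = binom(r+2, 3). -/

import Mathlib

open MvPolynomial

/-- The triple (R¹_r, R²_r, R³_r) of polynomials in ℂ[α,β,γ] (α = X 0, β = X 1, γ = X 2). -/
noncomputable def Rr : ℕ → MvPolynomial (Fin 3) ℂ × MvPolynomial (Fin 3) ℂ × MvPolynomial (Fin 3) ℂ
  | 0 => (1, 0, 0)
  | (r + 1) =>
      (X 0 * (Rr r).1 + C ((r : ℂ) ^ 2) * (Rr r).2.1,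
       (X 1 + C ((-1 : ℂ) ^ (r + 1) * 8)) * (Rr r).1 + C ((2 * r : ℂ) / (r + 1)) * (Rr r).2.2,
       X 2 * (Rr r).1)

/-- The ideal J_r = (R¹_r, R²_r, R³_r) ⊆ ℂ[α,β,γ]. -/
noncomputable def Jr (r : ℕ) : Ideal (MvPolynomial (Fin 3) ℂ) :=
  Ideal.span {(Rr r).1, (Rr r).2.1, (Rr r).2.2}

namespace RrProof

abbrev S := MvPolynomial (Fin 3) ℂ

/-- the shifted variable `β + (-1)^r 8` -/
noncomputable def be (r : ℕ) : S := X 1 + C ((-1 : ℂ) ^ r * 8)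

/-- `R¹_r` with `γ = 0` -/
noncomputable def B : ℕ → S
  | 0 => 1
  | 1 => X 0
  | (r + 2) => X 0 * B (r + 1) + C (((r : ℂ) + 1) ^ 2) * (be (r + 1) * B r)

lemma totalDegree_map_le (θ : S →ₐ[ℂ] S) (h : ∀ i, (θ (X i)).totalDegree ≤ 1) (p : S) :
    (θ p).totalDegree ≤ p.totalDegree := by
  conv_lhs => rw [p.as_sum, map_sum]
  refine totalDegree_finsetSum_le (fun m hm => ?_)
  have h1 : θ (monomial m (coeff m p)) = C (coeff m p) * ∏ i, θ (X i) ^ m i := by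
    rw [monomial_eq, map_mul, ← algebraMap_eq, AlgHom.commutes, Finsupp.prod_fintype _ _ (by simp),
      map_prod]
    simp
  rw [h1]
  refine (totalDegree_mul _ _).trans ?_
  rw [totalDegree_C, zero_add]
  refine (totalDegree_finsetProd _ _).trans ?_
  refine le_trans ?_ (le_totalDegree hm)
  rw [Finsupp.sum_fintype _ _ (by simp)]
  refine Finset.sum_le_sum (fun i _ => ?_)
  refine (totalDegree_pow _ _).trans ?_
  calc m i * _ ≤ m i * 1 := Nat.mul_le_mul_left _ (h i)
    _ = m i := mul_one _

lemma dvd_sub_map (θ : S →ₐ[ℂ] S) (d : S) (h : ∀ i, d ∣ X i - θ (X i)) (p : S) :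
    d ∣ p - θ p := by
  have : (Ideal.Quotient.mkₐ ℂ (Ideal.span {d})) = (Ideal.Quotient.mkₐ ℂ (Ideal.span {d})).comp θ := by
    apply MvPolynomial.algHom_ext
    intro i
    simp only [AlgHom.comp_apply, Ideal.Quotient.mkₐ_eq_mk]
    rw [Ideal.Quotient.eq, Ideal.mem_span_singleton]
    exact h i
  have h2 := congrArg (fun f => f p) this
  simp only [AlgHom.comp_apply, Ideal.Quotient.mkₐ_eq_mk] at h2
  rwa [Ideal.Quotient.eq, Ideal.mem_span_singleton] at h2

/-- set `γ = 0` -/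
noncomputable def phi : S →ₐ[ℂ] S := aeval ![X 0, X 1, 0]

/-- set `β = -c` -/
noncomputable def psi (c : ℂ) : S →ₐ[ℂ] S := aeval ![X 0, C (-c), X 2]

lemma phi_deg (p : S) : (phi p).totalDegree ≤ p.totalDegree := by
  apply totalDegree_map_le
  intro i
  fin_cases i <;> simp [phi]

lemma psi_deg (c : ℂ) (p : S) : (psi c p).totalDegree ≤ p.totalDegree := by
  apply totalDegree_map_le
  intro i
  fin_cases i <;> simp [psi, -C_neg, -map_neg]

lemma phi_dvd (p : S) : X 2 ∣ p - phi p := by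
  apply dvd_sub_map
  intro i
  fin_cases i <;> simp [phi]

lemma psi_dvd (c : ℂ) (p : S) : X 1 + C c ∣ p - psi c p := by
  apply dvd_sub_map
  intro i
  fin_cases i <;> simp [psi]

lemma psi_be (r : ℕ) : psi ((-1 : ℂ) ^ r * 8) (be r) = 0 := by
  have : ∀ c : ℂ, psi c (C c) = C c := fun c => by
    rw [← algebraMap_eq, AlgHom.commutes]
  rw [be, map_add, this]
  simp [psi]

lemma be_deg (r : ℕ) : (be r).totalDegree = 1 := by
  rw [be, totalDegree_add_eq_left_of_totalDegree_lt] <;> simp [-map_mul, -C_mul]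

lemma be_ne (r : ℕ) : be r ≠ 0 := by
  intro h
  have := be_deg r
  simp [h] at this

lemma Bpsi_deg (c : ℂ) (r : ℕ) : (psi c (B r)).totalDegree = r ∧ psi c (B r) ≠ 0 := by
  induction r using Nat.strong_induction_on with
  | _ r ih =>
    match r, ih with
    | 0, _ => simp [B]
    | 1, _ => simp [B, psi]
    | (r + 2), ih =>
      have h0 := ih r (by omega)
      have h1 := ih (r + 1) (by omega)
      have hx : psi c (X 0) = X 0 := by simp [psi]
      have hC : ∀ z : ℂ, psi c (C z) = C z := fun z => by rw [← algebraMap_eq, AlgHom.commutes]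
      have hbe : psi c (be (r + 1)) = C (-c + (-1) ^ (r + 1) * 8) := by
        rw [be, map_add, hC, C_add]
        simp [psi]
      have e : psi c (B (r + 2)) = X 0 * psi c (B (r + 1)) +
          C ((((r : ℂ) + 1) ^ 2) * (-c + (-1) ^ (r + 1) * 8)) * psi c (B r) := by
        rw [B, map_add, map_mul, map_mul, map_mul, hC, hbe, hx, C_mul]
        ring
      have d1 : (X 0 * psi c (B (r + 1))).totalDegree = r + 2 := by
        rw [totalDegree_mul_of_isDomain (X_ne_zero _) h1.2, h1.1, totalDegree_X]
        omega
      have d2 : (C ((((r : ℂ) + 1) ^ 2) * (-c + (-1) ^ (r + 1) * 8)) * psi c (B r)).totalDegree ≤ r := by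
        refine (totalDegree_mul _ _).trans ?_
        rw [totalDegree_C, h0.1, zero_add]
      have d3 : (psi c (B (r + 2))).totalDegree = r + 2 := by
        rw [e, totalDegree_add_eq_left_of_totalDegree_lt, d1]
        omega
      refine ⟨d3, fun h => ?_⟩
      rw [h, totalDegree_zero] at d3
      omega

lemma be_dvd_of_psi (r : ℕ) (p : S) (h : psi ((-1 : ℂ) ^ r * 8) p = 0) : be r ∣ p := by
  have := psi_dvd ((-1 : ℂ) ^ r * 8) p
  rwa [h, sub_zero] at this

lemma lemD (r : ℕ) : ∀ a b f : S, f = a * B (r + 1) + b * (be (r + 1) * B r) →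
    f.totalDegree ≤ r → f = 0 := by
  induction r with
  | zero =>
    intro a b f hf hd
    have h1 : psi ((-1 : ℂ) ^ (0 + 1) * 8) f = psi ((-1 : ℂ) ^ (0 + 1) * 8) a *
        psi ((-1 : ℂ) ^ (0 + 1) * 8) (B (0 + 1)) := by
      rw [hf, map_add, map_mul, map_mul, map_mul, psi_be]; ring
    have h2 := Bpsi_deg ((-1 : ℂ) ^ (0 + 1) * 8) (0 + 1)
    have h3 := psi_deg ((-1 : ℂ) ^ (0 + 1) * 8) f
    have h4 : psi ((-1 : ℂ) ^ (0 + 1) * 8) a = 0 := by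
      by_contra hne
      rw [h1, totalDegree_mul_of_isDomain hne h2.2, h2.1] at h3
      omega
    rw [h4, zero_mul] at h1
    obtain ⟨g, hg⟩ := be_dvd_of_psi _ _ h1
    by_contra hne
    have hg0 : g ≠ 0 := by rintro rfl; simp at hg; exact hne hg
    rw [hg, totalDegree_mul_of_isDomain (be_ne _) hg0, be_deg] at hd
    omega
  | succ r ih =>
    intro a b f hf hd
    have h1 : psi ((-1 : ℂ) ^ (r + 1 + 1) * 8) f = psi ((-1 : ℂ) ^ (r + 1 + 1) * 8) a *
        psi ((-1 : ℂ) ^ (r + 1 + 1) * 8) (B (r + 1 + 1)) := by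
      rw [hf, map_add, map_mul, map_mul, map_mul, psi_be]; ring
    have h2 := Bpsi_deg ((-1 : ℂ) ^ (r + 1 + 1) * 8) (r + 1 + 1)
    have h3 := psi_deg ((-1 : ℂ) ^ (r + 1 + 1) * 8) f
    have h4 : psi ((-1 : ℂ) ^ (r + 1 + 1) * 8) a = 0 := by
      by_contra hne
      rw [h1, totalDegree_mul_of_isDomain hne h2.2, h2.1] at h3
      omega
    rw [h4, zero_mul] at h1
    obtain ⟨g, hg⟩ := be_dvd_of_psi _ _ h1
    obtain ⟨a', ha'⟩ := be_dvd_of_psi _ _ h4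
    have key : g = (a' * X 0 + b) * B (r + 1) +
        (a' * C (((r : ℂ) + 1) ^ 2)) * (be (r + 1) * B r) := by
      apply mul_left_cancel₀ (be_ne (r + 1 + 1))
      rw [← hg, hf, ha', B]
      ring
    by_contra hne
    have hg0 : g ≠ 0 := by rintro rfl; simp at hg; exact hne hg
    rw [hg, totalDegree_mul_of_isDomain (be_ne _) hg0, be_deg] at hd
    exact hg0 (ih _ _ g key (by omega))

lemma lemC (r : ℕ) : ∀ a b : S, a * B (r + 1) + b * (be (r + 1) * B r) = 0 →
    ∃ h, a = h * (be (r + 1) * B r) ∧ b = - h * B (r + 1) := by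
  induction r with
  | zero =>
    intro a b hf
    have h1 : psi ((-1 : ℂ) ^ (0 + 1) * 8) a *
        psi ((-1 : ℂ) ^ (0 + 1) * 8) (B (0 + 1)) = 0 := by
      have := congrArg (psi ((-1 : ℂ) ^ (0 + 1) * 8)) hf
      rw [map_add, map_mul, map_mul, map_mul, psi_be] at this
      simpa using this
    have h2 := Bpsi_deg ((-1 : ℂ) ^ (0 + 1) * 8) (0 + 1)
    have h4 := (mul_eq_zero.1 h1).resolve_right h2.2
    obtain ⟨a', ha'⟩ := be_dvd_of_psi _ _ h4
    refine ⟨a', ?_, ?_⟩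
    · rw [ha', B]; ring
    · apply mul_left_cancel₀ (be_ne (0 + 1))
      rw [ha'] at hf
      simp only [B] at hf ⊢
      linear_combination hf
  | succ r ih =>
    intro a b hf
    have h1 : psi ((-1 : ℂ) ^ (r + 1 + 1) * 8) a *
        psi ((-1 : ℂ) ^ (r + 1 + 1) * 8) (B (r + 1 + 1)) = 0 := by
      have := congrArg (psi ((-1 : ℂ) ^ (r + 1 + 1) * 8)) hf
      rw [map_add, map_mul, map_mul, map_mul, psi_be] at this
      simpa using this
    have h2 := Bpsi_deg ((-1 : ℂ) ^ (r + 1 + 1) * 8) (r + 1 + 1)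
    have h4 := (mul_eq_zero.1 h1).resolve_right h2.2
    obtain ⟨a', ha'⟩ := be_dvd_of_psi _ _ h4
    have key : (a' * X 0 + b) * B (r + 1) +
        (a' * C (((r : ℂ) + 1) ^ 2)) * (be (r + 1) * B r) = 0 := by
      apply mul_left_cancel₀ (be_ne (r + 1 + 1))
      rw [mul_zero, ← hf, ha', B]
      ring
    obtain ⟨h, e1, e2⟩ := ih _ _ key
    have hc : ((r : ℂ) + 1) ^ 2 ≠ 0 := pow_ne_zero _ (Nat.cast_add_one_ne_zero r)
    have hcc : C ((((r : ℂ) + 1) ^ 2)⁻¹) * C (((r : ℂ) + 1) ^ 2) = (1 : S) := by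
      rw [← C_mul, inv_mul_cancel₀ hc, C_1]
    have hB : B (r + 1 + 1) = X 0 * B (r + 1) + C (((r : ℂ) + 1) ^ 2) * (be (r + 1) * B r) := rfl
    generalize C (((r : ℂ) + 1) ^ 2) = c at *
    generalize C ((((r : ℂ) + 1) ^ 2)⁻¹) = d at *
    refine ⟨- d * h, ?_, ?_⟩
    · rw [ha']
      linear_combination d * be (r + 1 + 1) * e2 - be (r + 1 + 1) * a' * hcc
    · rw [hB]
      linear_combination e1 - X 0 * d * e2 + (X 0 * a' - h * (be (r + 1) * B r)) * hcc

lemma R1_succ (r : ℕ) : (Rr (r + 1)).1 = X 0 * (Rr r).1 + C ((r : ℂ) ^ 2) * (Rr r).2.1 := rfl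

lemma R2_succ (r : ℕ) : (Rr (r + 1)).2.1 =
    be (r + 1) * (Rr r).1 + C ((2 * r : ℂ) / (r + 1)) * (Rr r).2.2 := rfl

lemma R3_succ (r : ℕ) : (Rr (r + 1)).2.2 = X 2 * (Rr r).1 := rfl

lemma R1_mem (r : ℕ) : (Rr r).1 ∈ Jr r := Ideal.subset_span (by simp)
lemma R2_mem (r : ℕ) : (Rr r).2.1 ∈ Jr r := Ideal.subset_span (by simp)
lemma R3_mem (r : ℕ) : (Rr r).2.2 ∈ Jr r := Ideal.subset_span (by simp)

lemma R1_succ_mem (r : ℕ) : (Rr (r + 1)).1 ∈ Jr r := by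
  rw [R1_succ]
  exact add_mem (Ideal.mul_mem_left _ _ (R1_mem r)) (Ideal.mul_mem_left _ _ (R2_mem r))

lemma R2_succ_mem (r : ℕ) : (Rr (r + 1)).2.1 ∈ Jr r := by
  rw [R2_succ]
  exact add_mem (Ideal.mul_mem_left _ _ (R1_mem r)) (Ideal.mul_mem_left _ _ (R3_mem r))

lemma mem_Jr {r : ℕ} {f : S} (hf : f ∈ Jr r) :
    ∃ a b c : S, f = a * (Rr r).1 + b * (Rr r).2.1 + c * (Rr r).2.2 := by
  rw [Jr, Ideal.mem_span_insert] at hf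
  obtain ⟨a, z, hz, rfl⟩ := hf
  rw [Ideal.mem_span_pair] at hz
  obtain ⟨b, c, rfl⟩ := hz
  exact ⟨a, b, c, by ring⟩

lemma phi_C (z : ℂ) : phi (C z) = C z := by rw [← algebraMap_eq, AlgHom.commutes]

lemma phi_be (r : ℕ) : phi (be r) = be r := by
  rw [be, map_add, phi_C]; simp [phi]

lemma phi_R3 (r : ℕ) : phi (Rr r).2.2 = 0 := by
  cases r with
  | zero => simp [Rr]
  | succ r => rw [R3_succ, map_mul]; simp [phi]

lemma phi_R2 (r : ℕ) : phi (Rr (r + 1)).2.1 = be (r + 1) * phi (Rr r).1 := by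
  rw [R2_succ, map_add, map_mul, map_mul, phi_be, phi_R3]
  simp

lemma phi_R1 (r : ℕ) : phi (Rr r).1 = B r := by
  induction r using Nat.strong_induction_on with
  | _ r ih =>
    match r, ih with
    | 0, _ => simp [Rr, B]
    | 1, _ => rw [R1_succ]; simp [Rr, B, phi]
    | (r + 2), ih =>
      have hx : phi (X 0) = X 0 := by simp [phi]
      rw [R1_succ, map_add, map_mul, map_mul, phi_C, phi_R2, ih r (by omega),
        ih (r + 1) (by omega), B, hx]
      push_cast
      rfl

lemma phi_R12 (r : ℕ) : phi (Rr r).1 = B r ∧ phi (Rr (r + 1)).2.1 = be (r + 1) * B r :=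
  ⟨phi_R1 r, by rw [phi_R2, phi_R1]⟩

lemma indep (r : ℕ) : ∀ f ∈ Jr r, f.totalDegree < r → f = 0 := by
  induction r with
  | zero => intro f _ h; omega
  | succ r ih =>
    intro f hf hd
    obtain ⟨a, b, c, e⟩ := mem_Jr hf
    have h1 : phi f = phi a * B (r + 1) + phi b * (be (r + 1) * B r) := by
      rw [e, map_add, map_add, map_mul, map_mul, map_mul, phi_R3, (phi_R12 (r + 1)).1,
        (phi_R12 r).2]
      ring
    have h2 : phi f = 0 := lemD r _ _ _ h1 (by have := phi_deg f; omega)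
    rw [h2] at h1
    obtain ⟨h, e1, e2⟩ := lemC r _ _ h1.symm
    obtain ⟨g, hg⟩ := phi_dvd f
    obtain ⟨a', ha'⟩ := phi_dvd a
    obtain ⟨b', hb'⟩ := phi_dvd b
    obtain ⟨u, hu⟩ := phi_dvd (Rr (r + 1)).1
    obtain ⟨v, hv⟩ := phi_dvd (Rr (r + 1)).2.1
    rw [(phi_R12 (r + 1)).1] at hu
    rw [(phi_R12 r).2] at hv
    rw [h2, sub_zero] at hg
    have key : g = (a' - h * v) * (Rr (r + 1)).1 + (b' + h * u) * (Rr (r + 1)).2.1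
        + c * (Rr r).1 := by
      apply mul_left_cancel₀ (X_ne_zero (2 : Fin 3) : (X 2 : S) ≠ 0)
      rw [← hg, e, R3_succ]
      linear_combination (Rr (r + 1)).1 * (ha' + e1 - h * hv) +
        (Rr (r + 1)).2.1 * (hb' + e2 + h * hu)
    have hgm : g ∈ Jr r := by
      rw [key]
      exact add_mem (add_mem (Ideal.mul_mem_left _ _ (R1_succ_mem r))
        (Ideal.mul_mem_left _ _ (R2_succ_mem r))) (Ideal.mul_mem_left _ _ (R1_mem r))
    by_contra hne
    have hg0 : g ≠ 0 := by rintro rfl; simp at hg; exact hne hg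
    rw [hg, totalDegree_mul_of_isDomain (X_ne_zero _) hg0, totalDegree_X] at hd
    exact hg0 (ih g hgm (by omega))

/-! Spanning -/

lemma C_inv_cancel {z : ℂ} (hz : z ≠ 0) : (C z⁻¹ * C z : S) = 1 := by
  rw [← C_mul, inv_mul_cancel₀ hz, C_1]

lemma Jr_induct {r : ℕ} {I : Ideal S} {d : S} (h1 : d * (Rr r).1 ∈ I) (h2 : d * (Rr r).2.1 ∈ I)
    (h3 : d * (Rr r).2.2 ∈ I) {f : S} (hf : f ∈ Jr r) : d * f ∈ I := by
  obtain ⟨a, b, c, rfl⟩ := mem_Jr hf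
  have := add_mem (add_mem (I.mul_mem_left a h1) (I.mul_mem_left b h2)) (I.mul_mem_left c h3)
  convert this using 1
  ring

lemma R2_mul_mem {r : ℕ} {I : Ideal S} {d : S} (h1 : d * (Rr r).1 ∈ I)
    (h2 : (Rr (r + 1)).1 ∈ I) : d * (Rr r).2.1 ∈ I := by
  rcases Nat.eq_zero_or_pos r with rfl | hr
  · simp [Rr]
  · have hz : ((r : ℂ) ^ 2) ≠ 0 := pow_ne_zero _ (by exact_mod_cast hr.ne')
    have h3 := I.mul_mem_left (C ((r : ℂ) ^ 2)⁻¹)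
      (sub_mem (I.mul_mem_left d h2) (I.mul_mem_left (X 0) h1))
    convert h3 using 1
    rw [R1_succ]
    linear_combination (- d * (Rr r).2.1) * C_inv_cancel hz

lemma gamma_mul {r : ℕ} {f : S} (hf : f ∈ Jr r) : X 2 * f ∈ Jr (r + 1) := by
  have h1 : X 2 * (Rr r).1 ∈ Jr (r + 1) := R3_mem (r + 1)
  refine Jr_induct h1 (R2_mul_mem h1 (R1_mem _)) ?_ hf
  rcases Nat.eq_zero_or_pos r with rfl | hr
  · simp [Rr]
  · have hz : ((2 * r : ℂ) / (r + 1)) ≠ 0 :=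
      div_ne_zero (mul_ne_zero two_ne_zero (by exact_mod_cast hr.ne')) (Nat.cast_add_one_ne_zero r)
    have h3 := (Jr (r + 1)).mul_mem_left (C ((2 * r : ℂ) / (r + 1))⁻¹)
      (sub_mem ((Jr (r + 1)).mul_mem_left (X 2) (R2_mem (r + 1)))
        ((Jr (r + 1)).mul_mem_left (be (r + 1)) h1))
    convert h3 using 1
    rw [R2_succ]
    linear_combination (- X 2 * (Rr r).2.2) * C_inv_cancel hz

lemma beta_mul {r : ℕ} {f : S} (hf : f ∈ Jr r) :
    be (r + 1) * f ∈ Jr (r + 1) ⊔ Ideal.span {X 2} := by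
  have hR3 : (Rr r).2.2 ∈ Jr (r + 1) ⊔ Ideal.span {X 2} := by
    apply Ideal.mem_sup_right
    rw [Ideal.mem_span_singleton]
    cases r with
    | zero => simp [Rr]
    | succ r => exact ⟨_, R3_succ r⟩
  have h1 : be (r + 1) * (Rr r).1 ∈ Jr (r + 1) ⊔ Ideal.span {X 2} := by
    have h2 : (Rr (r + 1)).2.1 ∈ Jr (r + 1) ⊔ Ideal.span {X 2} :=
      Ideal.mem_sup_left (R2_mem (r + 1))
    have := sub_mem h2
      (Ideal.mul_mem_left _ (C ((2 * r : ℂ) / (r + 1))) hR3)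
    convert this using 1
    rw [R2_succ]; ring
  exact Jr_induct h1 (R2_mul_mem h1 (Ideal.mem_sup_left (R1_mem _))) (Ideal.mul_mem_left _ _ hR3) hf

lemma R_deg (r : ℕ) : ((Rr (r + 1)).1 - X 0 ^ (r + 1)).totalDegree ≤ r ∧
    (Rr (r + 1)).2.1.totalDegree ≤ r + 1 ∧ (Rr (r + 1)).2.2.totalDegree ≤ r + 1 := by
  induction r with
  | zero =>
    refine ⟨by simp [Rr], ?_, ?_⟩
    · have := be_deg 1
      rw [R2_succ]
      simp [Rr, this]
    · simp [Rr]
  | succ r ih =>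
    obtain ⟨h1, h2, h3⟩ := ih
    have h0 : (Rr (r + 1)).1.totalDegree ≤ r + 1 := by
      have e : (Rr (r + 1)).1 = ((Rr (r + 1)).1 - X 0 ^ (r + 1)) + X 0 ^ (r + 1) := by ring
      rw [e]
      refine (totalDegree_add _ _).trans (max_le (by omega) ?_)
      rw [totalDegree_X_pow]
    refine ⟨?_, ?_, ?_⟩
    · have e : (Rr (r + 1 + 1)).1 - X 0 ^ (r + 1 + 1) =
          X 0 * ((Rr (r + 1)).1 - X 0 ^ (r + 1)) + C (((r + 1 : ℕ) : ℂ) ^ 2) * (Rr (r + 1)).2.1 := by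
        rw [R1_succ]; ring
      rw [e]
      refine (totalDegree_add _ _).trans (max_le ?_ ?_)
      · refine (totalDegree_mul _ _).trans ?_
        rw [totalDegree_X]; omega
      · refine (totalDegree_mul _ _).trans ?_
        rw [totalDegree_C]; omega
    · rw [R2_succ]
      refine (totalDegree_add _ _).trans (max_le ?_ ?_)
      · refine (totalDegree_mul _ _).trans ?_
        rw [be_deg]; omega
      · refine (totalDegree_mul _ _).trans ?_
        rw [totalDegree_C]; omega
    · rw [R3_succ]
      refine (totalDegree_mul _ _).trans ?_
      rw [totalDegree_X]; omega

/-- `p` is congruent to a polynomial of degree `< r` modulo `J_r` -/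
def Good (r : ℕ) (p : S) : Prop := ∃ j ∈ Jr r, ∃ q : S, p = j + q ∧ (q = 0 ∨ q.totalDegree < r)

lemma Good.add {r : ℕ} {p p' : S} (h : Good r p) (h' : Good r p') : Good r (p + p') := by
  obtain ⟨j, hj, q, rfl, hq⟩ := h
  obtain ⟨j', hj', q', rfl, hq'⟩ := h'
  refine ⟨j + j', add_mem hj hj', q + q', by ring, ?_⟩
  rcases hq with rfl | hq
  · simpa using hq'
  rcases hq' with rfl | hq'
  · simpa using Or.inr hq
  right
  exact (totalDegree_add _ _).trans_lt (max_lt hq hq')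

lemma Good.smul {r : ℕ} {p : S} (z : ℂ) (h : Good r p) : Good r (C z * p) := by
  obtain ⟨j, hj, q, rfl, hq⟩ := h
  refine ⟨C z * j, Ideal.mul_mem_left _ _ hj, C z * q, by ring, ?_⟩
  rcases hq with rfl | hq
  · simp
  right
  refine (totalDegree_mul _ _).trans_lt ?_
  rwa [totalDegree_C, zero_add]

lemma Good.of_mem {r : ℕ} {p : S} (h : p ∈ Jr r) : Good r p := ⟨p, h, 0, by simp, Or.inl rfl⟩

lemma Good.of_deg {r : ℕ} {p : S} (h : p.totalDegree < r) : Good r p :=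
  ⟨0, zero_mem _, p, by simp, Or.inr h⟩

lemma Good.of_deg' {r : ℕ} {d q : S} (hd : d.totalDegree ≤ 1) (h : q = 0 ∨ q.totalDegree < r) :
    Good (r + 1) (d * q) := by
  rcases h with rfl | h
  · rw [mul_zero]; exact Good.of_mem (zero_mem _)
  · exact Good.of_deg ((totalDegree_mul _ _).trans_lt (by omega))

lemma Good.of_monomials {r : ℕ} (n : ℕ)
    (h : ∀ m : Fin 3 →₀ ℕ, m.degree ≤ n → Good r (monomial m 1))
    (p : S) (hp : p.totalDegree ≤ n) : Good r p := by
  rw [p.as_sum]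
  refine Finset.sum_induction _ (Good r) (fun _ _ => Good.add) (Good.of_mem (zero_mem _)) ?_
  intro m hm
  have h1 := (h m ((le_totalDegree hm).trans hp)).smul (coeff m p)
  rwa [C_mul_monomial, mul_one] at h1

lemma all_good (r : ℕ) : ∀ p, Good r p := by
  induction r with
  | zero =>
    intro p
    apply Good.of_mem
    have : Jr 0 = ⊤ := (Ideal.eq_top_iff_one _).2 (R1_mem 0)
    rw [this]; trivial
  | succ r ih =>
    have hg : ∀ p : S, Good (r + 1) (X 2 * p) := by
      intro p
      obtain ⟨j, hj, q, rfl, hq⟩ := ih p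
      rw [mul_add]
      exact (Good.of_mem (gamma_mul hj)).add (Good.of_deg' (by simp) hq)
    have hb : ∀ p : S, Good (r + 1) (be (r + 1) * p) := by
      intro p
      obtain ⟨j, hj, q, rfl, hq⟩ := ih p
      rw [mul_add]
      refine Good.add ?_ (Good.of_deg' (be_deg _).le hq)
      obtain ⟨y, hy, z, hz, e⟩ := Submodule.mem_sup.1 (beta_mul hj)
      rw [Ideal.mem_span_singleton] at hz
      obtain ⟨w, rfl⟩ := hz
      rw [← e]
      exact (Good.of_mem hy).add (hg w)
    have hn : ∀ n : ℕ, ∀ p : S, p.totalDegree ≤ n → Good (r + 1) p := by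
      intro n
      induction n with
      | zero => intro p hp; exact Good.of_deg (by omega)
      | succ n ihn =>
        intro p hp
        refine Good.of_monomials (n + 1) ?_ p hp
        intro m hm
        by_cases hmn : m.degree ≤ n
        · exact ihn _ ((totalDegree_monomial_le _ _).trans hmn)
        by_cases hnr : n < r
        · exact Good.of_deg (((totalDegree_monomial_le _ _).trans hm).trans_lt (by omega))
        have key : ∀ i, m i ≠ 0 → ∃ m' : Fin 3 →₀ ℕ, m'.degree ≤ n ∧
            (monomial m 1 : S) = X i * monomial m' 1 := by
          intro i hi
          have hle : Finsupp.single i 1 ≤ m := by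
            rw [Finsupp.single_le_iff]; omega
          have e : Finsupp.single i 1 + (m - Finsupp.single i 1) = m := add_tsub_cancel_of_le hle
          refine ⟨m - Finsupp.single i 1, ?_, ?_⟩
          · have h2 := congrArg Finsupp.degree e
            rw [map_add, Finsupp.degree_single] at h2
            omega
          · rw [X, monomial_mul, e, one_mul]
        by_cases h2 : m 2 = 0
        · by_cases h1 : m 1 = 0
          · have hm0 : (monomial m 1 : S) = X 0 ^ (n + 1) := by
              have hd : m.degree = m 0 + m 1 + m 2 := by
                rw [Finsupp.degree_eq_sum, Fin.sum_univ_three]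
              have h0 : m 0 = n + 1 := by omega
              rw [X_pow_eq_monomial]
              have hs : m = Finsupp.single 0 (n + 1) := by
                ext i
                fin_cases i <;> simp [h0, h1, h2]
              rw [hs]
            have e : (monomial m 1 : S) = X 0 ^ (n - r) * (Rr (r + 1)).1 +
                C (-1) * (X 0 ^ (n - r) * ((Rr (r + 1)).1 - X 0 ^ (r + 1))) := by
              have : n + 1 = (n - r) + (r + 1) := by omega
              rw [hm0, this, pow_add]
              simp
              ring
            rw [e]
            refine (Good.of_mem (Ideal.mul_mem_left _ _ (R1_mem _))).add (Good.smul _ (ihn _ ?_))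
            refine (totalDegree_mul _ _).trans ?_
            rw [totalDegree_X_pow]
            have := (R_deg r).1
            omega
          · obtain ⟨m', hd, e⟩ := key 1 h1
            have e' : (monomial m 1 : S) = be (r + 1) * monomial m' 1 +
                C (-((-1 : ℂ) ^ (r + 1) * 8)) * monomial m' 1 := by
              rw [e, be, C_neg]; ring
            rw [e']
            exact (hb _).add (Good.smul _ (ihn _ ((totalDegree_monomial_le _ _).trans hd)))
        · obtain ⟨m', hd, e⟩ := key 2 h2
          rw [e]; exact hg _
    intro p
    exact hn _ p le_rfl

/-- index type -/
abbrev Idx (r : ℕ) := {t : ℕ × ℕ × ℕ // t.1 + t.2.1 + t.2.2 < r}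

lemma sig_eq {r s s' x x' a : ℕ} (hs : s < r) (hs' : s' < r) (hx : x < s + 1) (hx' : x' < s' + 1)
    (ha : a < x + 1) (ha' : a < x' + 1) (e : s = s') (e' : x = x') :
    (⟨⟨s, hs⟩, ⟨x, hx⟩, ⟨a, ha⟩⟩ : Σ s : Fin r, Σ x : Fin (s.1 + 1), Fin (x.1 + 1)) =
      ⟨⟨s', hs'⟩, ⟨x', hx'⟩, ⟨a, ha'⟩⟩ := by
  subst e e'
  rfl

def idxEquiv (r : ℕ) : Idx r ≃ (Σ s : Fin r, Σ x : Fin (s.1 + 1), Fin (x.1 + 1)) where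
  toFun t := ⟨⟨t.1.1 + t.1.2.1 + t.1.2.2, t.2⟩, ⟨t.1.1 + t.1.2.1, by simp only; omega⟩,
    ⟨t.1.1, by simp only; omega⟩⟩
  invFun u := ⟨(u.2.2.1, u.2.1.1 - u.2.2.1, u.1.1 - u.2.1.1), by
    have := u.1.2; have := u.2.1.2; have := u.2.2.2; simp only; omega⟩
  left_inv := by
    rintro ⟨⟨a, b, c⟩, h⟩
    simp
  right_inv := by
    rintro ⟨⟨s, hs⟩, ⟨x, hx⟩, ⟨a, ha⟩⟩
    simp only at hx ha
    apply sig_eq <;> (simp only; omega)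

lemma idx_card (r : ℕ) : Nat.card (Idx r) = (r + 2).choose 3 := by
  rw [Nat.card_congr (idxEquiv r), Nat.card_eq_fintype_card]
  simp only [Fintype.card_sigma, Fintype.card_fin]
  have h1 : ∀ s : ℕ, ∑ x : Fin (s + 1), (x.1 + 1) = (s + 2).choose 2 := by
    intro s
    rw [Fin.sum_univ_eq_sum_range (fun x => x + 1)]
    induction s with
    | zero => simp
    | succ s ih => 
      rw [Finset.sum_range_succ, ih, Nat.choose_succ_succ' (s + 2) 1, Nat.choose_one_right]; ring
  simp only [h1]
  rw [Fin.sum_univ_eq_sum_range (fun x => (x + 2).choose 2)]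
  induction r with
  | zero => simp
  | succ r ih =>
    rw [Finset.sum_range_succ, ih, Nat.choose_succ_succ' (r + 2) 2]; ring

/-- exponent vector -/
noncomputable def ex (t : ℕ × ℕ × ℕ) : Fin 3 →₀ ℕ :=
  Finsupp.equivFunOnFinite.symm ![t.1, t.2.1, t.2.2]

lemma ex_inj : Function.Injective ex := by
  rintro ⟨a, b, c⟩ ⟨a', b', c'⟩ h
  have h' := fun i => DFunLike.congr_fun h i
  have h0 := h' 0
  have h1 := h' 1
  have h2 := h' 2
  simp [ex] at h0 h1 h2
  simp [h0, h1, h2]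

lemma ex_deg (t : ℕ × ℕ × ℕ) : (ex t).degree = t.1 + t.2.1 + t.2.2 := by
  rw [Finsupp.degree_eq_sum, Fin.sum_univ_three]; simp [ex]

lemma ex_monomial (t : ℕ × ℕ × ℕ) :
    (X 0 ^ t.1 * X 1 ^ t.2.1 * X 2 ^ t.2.2 : S) = monomial (ex t) 1 := by
  rw [monomial_eq, Finsupp.prod_fintype _ _ (by simp), Fin.prod_univ_three]
  simp [ex]

lemma ex_surj (m : Fin 3 →₀ ℕ) : ex (m 0, m 1, m 2) = m := by
  ext i
  fin_cases i <;> simp [ex]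

lemma mem_span_deg {r : ℕ} {p : S}
    (hp : p ∈ Submodule.span ℂ (Set.range (fun t : Idx r => (monomial (ex t.1) 1 : S)))) :
    p = 0 ∨ p.totalDegree < r := by
  induction hp using Submodule.span_induction with
  | mem x h =>
    obtain ⟨t, rfl⟩ := h
    right
    exact (totalDegree_monomial_le _ _).trans_lt (lt_of_eq_of_lt (ex_deg _) t.2)
  | zero => exact Or.inl rfl
  | add x y _ _ hx hy =>
    rcases hx with rfl | hx
    · simpa using hy
    rcases hy with rfl | hy
    · simpa using Or.inr hx
    exact Or.inr ((totalDegree_add _ _).trans_lt (max_lt hx hy))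
  | smul a x _ hx =>
    rcases hx with rfl | hx
    · simp
    exact Or.inr ((totalDegree_smul_le _ _).trans_lt hx)

lemma deg_mem_span {r : ℕ} {p : S} (hp : p = 0 ∨ p.totalDegree < r) :
    p ∈ Submodule.span ℂ (Set.range (fun t : Idx r => (monomial (ex t.1) 1 : S))) := by
  rcases hp with rfl | hp
  · exact zero_mem _
  rw [p.as_sum]
  refine Submodule.sum_mem _ (fun m hm => ?_)
  have e : monomial m (coeff m p) = coeff m p • (monomial m 1 : S) := by
    rw [smul_monomial, smul_eq_mul, mul_one]
  rw [e]
  refine Submodule.smul_mem _ _ (Submodule.subset_span ?_)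
  have hd : m.degree < r := lt_of_le_of_lt (le_totalDegree hm) hp
  refine ⟨⟨(m 0, m 1, m 2), ?_⟩, ?_⟩
  · rw [← ex_deg, ex_surj]; exact hd
  · simp only [ex_surj]

lemma fn_eq (r : ℕ) : (fun t : Idx r =>
      Ideal.Quotient.mk (Jr r) (X 0 ^ t.1.1 * X 1 ^ t.1.2.1 * X 2 ^ t.1.2.2)) =
    (Ideal.Quotient.mkₐ ℂ (Jr r)).toLinearMap ∘ (fun t : Idx r => (monomial (ex t.1) 1 : S)) := by
  ext1 t
  simp only [Function.comp_apply, ← ex_monomial]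
  rfl

lemma li (r : ℕ) : LinearIndependent ℂ (fun t : Idx r =>
      Ideal.Quotient.mk (Jr r) (X 0 ^ t.1.1 * X 1 ^ t.1.2.1 * X 2 ^ t.1.2.2)) := by
  have h0 : LinearIndependent ℂ (fun t : Idx r => (monomial (ex t.1) 1 : S)) := by
    have := (basisMonomials (Fin 3) ℂ).linearIndependent.comp (fun t : Idx r => ex t.1)
      (fun a b h => Subtype.ext (ex_inj h))
    have e : (fun t : Idx r => (monomial (ex t.1) 1 : S)) =
        (basisMonomials (Fin 3) ℂ) ∘ (fun t : Idx r => ex t.1) := by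
      ext1 t
      simp
    rw [e]
    exact this
  have h1 := h0.map (f := (Ideal.Quotient.mkₐ ℂ (Jr r)).toLinearMap) (by
    rw [Submodule.disjoint_def]
    intro p hp hk
    have hk' : p ∈ Jr r := Ideal.Quotient.eq_zero_iff_mem.1 hk
    rcases mem_span_deg hp with h | h
    · exact h
    · exact indep r p hk' h)
  rw [fn_eq]
  exact h1

lemma sp (r : ℕ) : Submodule.span ℂ (Set.range (fun t : Idx r =>
      Ideal.Quotient.mk (Jr r) (X 0 ^ t.1.1 * X 1 ^ t.1.2.1 * X 2 ^ t.1.2.2))) = ⊤ := by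
  rw [eq_top_iff]
  rintro x -
  obtain ⟨p, rfl⟩ := Ideal.Quotient.mk_surjective x
  obtain ⟨j, hj, q, rfl, hq⟩ := all_good r p
  have h1 := Submodule.mem_map_of_mem (f := (Ideal.Quotient.mkₐ ℂ (Jr r)).toLinearMap)
    (deg_mem_span hq)
  rw [Submodule.map_span, ← Set.range_comp] at h1
  rw [map_add, Ideal.Quotient.eq_zero_iff_mem.2 hj, zero_add]
  rw [fn_eq]
  exact h1

end RrProof

/-- For every r ≥ 0, the residue classes of the monomials α^a·β^b·γ^c with a + b + c < r form a
ℂ-vector-space basis of F_r = ℂ[α,β,γ]/J_r; in particular dim_ℂ F_r = binom(r+2, 3). -/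
theorem stmt1 (r : ℕ) :
    LinearIndependent ℂ (fun t : {t : ℕ × ℕ × ℕ // t.1 + t.2.1 + t.2.2 < r} =>
      Ideal.Quotient.mk (Jr r) (X 0 ^ t.1.1 * X 1 ^ t.1.2.1 * X 2 ^ t.1.2.2)) ∧
    Submodule.span ℂ (Set.range (fun t : {t : ℕ × ℕ × ℕ // t.1 + t.2.1 + t.2.2 < r} =>
      Ideal.Quotient.mk (Jr r) (X 0 ^ t.1.1 * X 1 ^ t.1.2.1 * X 2 ^ t.1.2.2))) = ⊤ ∧
    Module.finrank ℂ (MvPolynomial (Fin 3) ℂ ⧸ Jr r) = (r + 2).choose 3 := by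
  refine ⟨RrProof.li r, RrProof.sp r, ?_⟩
  rw [Module.finrank_eq_nat_card_basis (Module.Basis.mk (RrProof.li r) (RrProof.sp r).ge)]
  exact RrProof.idx_card r
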